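/- arXiv:2501.08151 — 5 statements merged into one kernel-verified Lean document; each statement's English description precedes it below -/
import Mathlib

section
/- If deg(Ē) > 0 for every nonempty subset Ē ⊆ E (in particular for Ē = E), then the Feynman integral ∫_{Λ^V} ∏_{e∈E} |K(x_{s(e)} − x_{t(e)})| dx over the product of copies of the torus indexed by V is finite. -/
open MeasureTheory

instance : Fact ((0 : ℝ) < 1) := ⟨one_pos⟩

/-!
Fix `b < d` so close to `d` that `-ℓ |F| ≤ b (|V(F)| - 1)` still holds for every nonempty set `F` of
edges, and let `k = max 1 (|·| ^ (-b))`, which is integrable. The exponents `p = -ℓ / b`, for which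
`|K|` is at most a multiple of `k ^ p`, then satisfy Edmonds' inequalities for the forest polytope.
For each `x`, run Kruskal's algorithm on the edges with weights `log k (x_s - x_t)`: it gives
a forest `T`, depending on `x`, with `∏ e, k (x_s - x_t) ^ p ≤ ∏ e ∈ T, k (x_s - x_t)`. There are
finitely many forests, and the integral of the right-hand side over a fixed forest factorizes into
integrals of `k`, because the differences along the edges of a forest are independent.
-/

open scoped NNReal ENNReal Topology

section Forest

lemma sum_mul_sub_le_of_le {E : Type*} {p w : E → ℝ} {F T : Finset E} {m m' : ℝ} (hm : m ≤ m')
    (hcard : ∑ e ∈ F, p e ≤ T.card)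
    (hsum : ∑ e ∈ F, p e * (w e - m') ≤ ∑ e ∈ T, (w e - m')) :
    ∑ e ∈ F, p e * (w e - m) ≤ ∑ e ∈ T, (w e - m) :=
  calc ∑ e ∈ F, p e * (w e - m)
      = ∑ e ∈ F, p e * (w e - m') + (∑ e ∈ F, p e) * (m' - m) := by
        rw [Finset.sum_mul, ← Finset.sum_add_distrib]
        exact Finset.sum_congr rfl fun e _ => by ring
    _ ≤ ∑ e ∈ T, (w e - m') + T.card * (m' - m) :=
        add_le_add hsum (mul_le_mul_of_nonneg_right hcard (sub_nonneg.mpr hm))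
    _ = ∑ e ∈ T, (w e - m) := by
        rw [← nsmul_eq_mul, ← Finset.sum_const, ← Finset.sum_add_distrib]
        exact Finset.sum_congr rfl fun e _ => by ring

variable {V E : Type*} [DecidableEq V] {s t : E → V}

/-- The exponents `p` satisfy Edmonds' inequalities for the forest polytope of the multigraph with
edges `e` joining `s e` to `t e`; their signs are left free. With `p = -ℓ / d` and strict
inequalities this is the power counting condition on a Feynman diagram. -/
def InForestPolytope (s t : E → V) (p : E → ℝ) : Prop :=
  ∀ F : Finset E, F.Nonempty → ∑ e ∈ F, p e ≤ ((F.image s ∪ F.image t).card : ℝ) - 1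

lemma InForestPolytope.sum_le_card_sub_card_image [Fintype V] {κ : Type*} [DecidableEq κ]
    {p : E → ℝ} (hp : InForestPolytope s t p) {c : V → κ} {F : Finset E}
    (hc : ∀ e ∈ F, c (s e) = c (t e)) :
    ∑ e ∈ F, p e ≤ (Fintype.card V : ℝ) - (Finset.univ.image c).card := by
  have sum_le_card_fiber_sub_one : ∀ k ∈ Finset.univ.image c,
      ∑ e ∈ F with c (s e) = k, p e ≤ ((Finset.univ.filter (c · = k)).card : ℝ) - 1 := by
    intro k hk
    rcases (F.filter fun e => c (s e) = k).eq_empty_or_nonempty with hempty | hne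
    · have hfiber : (Finset.univ.filter (c · = k)).Nonempty := by
        simpa [Finset.Nonempty] using hk
      rw [hempty, Finset.sum_empty, sub_nonneg]
      exact_mod_cast hfiber.card_pos
    · refine (hp _ hne).trans (sub_le_sub_right (Nat.cast_le.mpr (Finset.card_le_card ?_)) 1)
      intro v hv
      simp only [Finset.mem_union, Finset.mem_image, Finset.mem_filter] at hv
      rcases hv with ⟨e, ⟨_, hcolor⟩, rfl⟩ | ⟨e, ⟨he, hcolor⟩, rfl⟩
      · simp [hcolor]
      · simp [← hc e he, hcolor]
  calc ∑ e ∈ F, p e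
      = ∑ k ∈ Finset.univ.image c, ∑ e ∈ F with c (s e) = k, p e :=
        (Finset.sum_fiberwise_of_maps_to (by simp) p).symm
    _ ≤ ∑ k ∈ Finset.univ.image c, (((Finset.univ.filter (c · = k)).card : ℝ) - 1) :=
        Finset.sum_le_sum sum_le_card_fiber_sub_one
    _ = (Fintype.card V : ℝ) - (Finset.univ.image c).card := by
        rw [Finset.sum_sub_distrib, ← Nat.cast_sum,
          ← Finset.card_eq_sum_card_fiberwise (fun v _ => Finset.mem_image_of_mem c (by simp))]
        simp

variable [DecidableEq E]

/-- `IsForestColoring s t T c` says that the edge set `T` is a forest and that `c` colors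
the vertices by the connected components of `T`. Forests are grown one edge at a time: an edge
joining two components is added by recoloring the component of its source. -/
inductive IsForestColoring (s t : E → V) : Finset E → (V → V) → Prop
  | empty : IsForestColoring s t ∅ id
  | insert {T : Finset E} {c : V → V} (e : E) (hT : IsForestColoring s t T c)
      (he : c (s e) ≠ c (t e)) :
      IsForestColoring s t (insert e T) (Function.update id (c (s e)) (c (t e)) ∘ c)

namespace IsForestColoring

variable {T : Finset E} {c : V → V}

lemma color_eq (hT : IsForestColoring s t T c) : ∀ e ∈ T, c (s e) = c (t e) := by
  induction hT with
  | empty => simp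
  | insert e _ he ih =>
    intro e' he'
    rcases Finset.mem_insert.mp he' with rfl | he'
    · simp [Function.update_of_ne he.symm]
    · simp [ih e' he']

lemma notMem_of_ne (hT : IsForestColoring s t T c) {e : E} (he : c (s e) ≠ c (t e)) : e ∉ T :=
  fun heT => he (hT.color_eq e heT)

lemma card_le [Fintype V] (hT : IsForestColoring s t T c) :
    Fintype.card V ≤ T.card + (Finset.univ.image c).card := by
  induction hT with
  | empty => simp
  | @insert T c e hT he ih =>
    have hsubset : (Finset.univ.image c).erase (c (s e)) ⊆
        Finset.univ.image (Function.update id (c (s e)) (c (t e)) ∘ c) := by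
      intro k hk
      obtain ⟨hne, v, rfl⟩ : k ≠ c (s e) ∧ ∃ v, c v = k := by simpa using hk
      exact Finset.mem_image.mpr ⟨v, Finset.mem_univ v, by simp [Function.update_of_ne hne]⟩
    have hcard := Finset.card_le_card hsubset
    rw [Finset.card_erase_of_mem (Finset.mem_image_of_mem c (Finset.mem_univ _))] at hcard
    rw [Finset.card_insert_of_notMem (hT.notMem_of_ne he)]
    omega

lemma sum_le_card [Finite V] (hT : IsForestColoring s t T c) {p : E → ℝ}
    (hp : InForestPolytope s t p) {F : Finset E} (hc : ∀ e ∈ F, c (s e) = c (t e)) :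
    ∑ e ∈ F, p e ≤ T.card := by
  cases nonempty_fintype V
  have hcard : (Fintype.card V : ℝ) ≤ T.card + (Finset.univ.image c).card := mod_cast hT.card_le
  linarith [hp.sum_le_card_sub_card_image hc]

end IsForestColoring

-- Kruskal's algorithm: the edges are processed in order of decreasing weight. The lower bound `m`
-- is what makes the induction work: for `m = w e₀` the new edge `e₀` does not contribute.
lemma InForestPolytope.exists_isForestColoring_sum_mul_sub_le [Finite V] {p : E → ℝ}
    (hp : InForestPolytope s t p) (w : E → ℝ) (F : Finset E) :
    ∃ T c, IsForestColoring s t T c ∧ (∀ e ∈ F, c (s e) = c (t e)) ∧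
      ∀ m, (∀ e ∈ F, m ≤ w e) → ∑ e ∈ F, p e * (w e - m) ≤ ∑ e ∈ T, (w e - m) := by
  induction F using Finset.induction_on_min_value w with
  | empty => exact ⟨∅, id, .empty, by simp, by simp⟩
  | insert e₀ F he₀ hmin ih =>
    obtain ⟨T, c, hT, hc, hle⟩ := ih
    obtain ⟨T', c', hT', hc', hsum⟩ : ∃ T' c', IsForestColoring s t T' c' ∧
        (∀ e ∈ insert e₀ F, c' (s e) = c' (t e)) ∧
        ∑ e ∈ T', (w e - w e₀) = ∑ e ∈ T, (w e - w e₀) := by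
      by_cases hloop : c (s e₀) = c (t e₀)
      · exact ⟨T, c, hT, by simpa [hloop] using hc, rfl⟩
      · have hinsert := IsForestColoring.insert e₀ hT hloop
        refine ⟨_, _, hinsert, fun e he => ?_, ?_⟩
        · rcases Finset.mem_insert.mp he with rfl | he
          · exact hinsert.color_eq e (Finset.mem_insert_self e T)
          · simp [hc e he]
        · simp [Finset.sum_insert (hT.notMem_of_ne hloop)]
    refine ⟨T', c', hT', hc', fun m hm => ?_⟩
    refine sum_mul_sub_le_of_le (hm e₀ (Finset.mem_insert_self e₀ F)) (hT'.sum_le_card hp hc') ?_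
    simpa [Finset.sum_insert he₀, hsum] using hle (w e₀) hmin

lemma InForestPolytope.exists_isForestColoring_prod_rpow_le [Finite V] [Fintype E] {p : E → ℝ}
    (hp : InForestPolytope s t p) {r : E → ℝ≥0} (hr : ∀ e, 1 ≤ r e) :
    ∃ T c, IsForestColoring s t T c ∧ ∏ e, r e ^ p e ≤ ∏ e ∈ T, r e := by
  obtain ⟨T, c, hT, -, hle⟩ :=
    hp.exists_isForestColoring_sum_mul_sub_le (fun e => Real.log (r e)) Finset.univ
  have hlog : ∑ e, p e * Real.log (r e) ≤ ∑ e ∈ T, Real.log (r e) := by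
    simpa using hle 0 fun e _ => Real.log_nonneg (hr e)
  have hpos : ∀ e, (0 : ℝ) < r e := fun e => zero_lt_one.trans_le (hr e)
  refine ⟨T, c, hT, NNReal.coe_le_coe.mp ?_⟩
  calc ((∏ e, r e ^ p e : ℝ≥0) : ℝ) = Real.exp (∑ e, p e * Real.log (r e)) := by
        simp [Real.exp_sum, Real.rpow_def_of_pos (hpos _), mul_comm]
    _ ≤ Real.exp (∑ e ∈ T, Real.log (r e)) := Real.exp_le_exp.mpr hlog
    _ = ((∏ e ∈ T, r e : ℝ≥0) : ℝ) := by simp [Real.exp_sum, Real.exp_log (hpos _)]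

end Forest

section CompactGroup

variable {G V : Type*} [AddCommGroup G] [MeasurableSpace G] [MeasurableAdd₂ G] [MeasurableSub₂ G]
  [Fintype V] (μ : Measure G) [IsProbabilityMeasure μ] [μ.IsAddLeftInvariant]

-- Translating the coordinates in `A` by `y` changes only the second factor, to `g (y + x u - x v)`;
-- now average over `y`.
lemma lintegral_mul_comp_sub_eq_mul {A : Set V} {u v : V} (hu : u ∈ A) (hv : v ∉ A)
    {Φ : (V → G) → ℝ≥0∞} (hΦ : Measurable Φ)
    (hΦ_add : ∀ y x, Φ (A.indicator (fun _ => y) + x) = Φ x) {g : G → ℝ≥0∞} (hg : Measurable g) :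
    ∫⁻ x, Φ x * g (x u - x v) ∂Measure.pi (fun _ => μ) =
      (∫⁻ x, Φ x ∂Measure.pi fun _ => μ) * ∫⁻ y, g y ∂μ := by
  have htranslate : ∀ y : G, ∫⁻ x, Φ x * g (x u - x v) ∂Measure.pi (fun _ => μ) =
      ∫⁻ x, Φ x * g (y + (x u - x v)) ∂Measure.pi fun _ => μ := fun y => by
    rw [← lintegral_add_left_eq_self _ (A.indicator fun _ => y)]
    simp only [hΦ_add, Pi.add_apply, Set.indicator_of_mem hu, Set.indicator_of_notMem hv, zero_add,
      add_sub_assoc]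
  calc ∫⁻ x, Φ x * g (x u - x v) ∂Measure.pi (fun _ => μ)
      = ∫⁻ y, ∫⁻ x, Φ x * g (y + (x u - x v)) ∂Measure.pi (fun _ => μ) ∂μ := by
        simp [← htranslate]
    _ = ∫⁻ x, (∫⁻ y, Φ x * g (y + (x u - x v)) ∂μ) ∂Measure.pi fun _ => μ :=
        lintegral_lintegral_swap (by fun_prop)
    _ = ∫⁻ x, Φ x * ∫⁻ y, g y ∂μ ∂Measure.pi fun _ => μ := by
        refine lintegral_congr fun x => ?_
        rw [lintegral_const_mul _ (by fun_prop), lintegral_add_right_eq_self]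
    _ = (∫⁻ x, Φ x ∂Measure.pi fun _ => μ) * ∫⁻ y, g y ∂μ := lintegral_mul_const _ hΦ

variable {E : Type*} [DecidableEq V] {s t : E → V}

lemma IsForestColoring.lintegral_prod_eq_prod [DecidableEq E] {T : Finset E} {c : V → V}
    (hT : IsForestColoring s t T c) {g : E → G → ℝ≥0∞} (hg : ∀ e, Measurable (g e)) :
    ∫⁻ x, ∏ e ∈ T, g e (x (s e) - x (t e)) ∂Measure.pi (fun _ => μ) =
      ∏ e ∈ T, ∫⁻ y, g e y ∂μ := by
  induction hT with
  | empty => simp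
  | @insert T c e hT he ih =>
    have heT := hT.notMem_of_ne he
    simp_rw [Finset.prod_insert heT, ← ih, mul_comm (g e _), mul_comm (∫⁻ y, g e y ∂μ)]
    refine lintegral_mul_comp_sub_eq_mul μ (A := c ⁻¹' {c (s e)}) rfl he.symm (by fun_prop)
      (fun y x => Finset.prod_congr rfl fun e' he' => ?_) (hg e)
    simp [Set.indicator, hT.color_eq e' he']

theorem lintegral_prod_rpow_lt_top [Fintype E] {p : E → ℝ} (hp : InForestPolytope s t p)
    {k : E → G → ℝ≥0} (hk : ∀ e, Measurable (k e)) (hk_one : ∀ e y, 1 ≤ k e y)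
    (hk_int : ∀ e, ∫⁻ y, k e y ∂μ < ∞) :
    ∫⁻ x, ((∏ e, k e (x (s e) - x (t e)) ^ p e : ℝ≥0) : ℝ≥0∞) ∂Measure.pi (fun _ => μ) < ∞ := by
  classical
  let forests : Finset (Finset E) := {T | ∃ c, IsForestColoring s t T c}
  have hbound : ∀ x : V → G, ((∏ e, k e (x (s e) - x (t e)) ^ p e : ℝ≥0) : ℝ≥0∞) ≤
      ∑ T ∈ forests, ∏ e ∈ T, (k e (x (s e) - x (t e)) : ℝ≥0∞) := by
    intro x
    obtain ⟨T, c, hT, hle⟩ :=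
      hp.exists_isForestColoring_prod_rpow_le fun e => hk_one e (x (s e) - x (t e))
    have hmem : T ∈ forests := by simpa [forests] using ⟨c, hT⟩
    calc ((∏ e, k e (x (s e) - x (t e)) ^ p e : ℝ≥0) : ℝ≥0∞)
        ≤ ∏ e ∈ T, (k e (x (s e) - x (t e)) : ℝ≥0∞) := mod_cast hle
      _ ≤ ∑ T ∈ forests, ∏ e ∈ T, (k e (x (s e) - x (t e)) : ℝ≥0∞) :=
        Finset.single_le_sum (f := fun T => ∏ e ∈ T, (k e (x (s e) - x (t e)) : ℝ≥0∞))
          (fun _ _ => zero_le) hmem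
  refine (lintegral_mono hbound).trans_lt ?_
  rw [lintegral_finsetSum _ fun T _ => by fun_prop]
  refine ENNReal.sum_lt_top.mpr fun T hT => ?_
  obtain ⟨c, hT⟩ : ∃ c, IsForestColoring s t T c := by simpa [forests] using hT
  rw [hT.lintegral_prod_eq_prod μ fun e => (hk e).coe_nnreal_ennreal]
  exact ENNReal.prod_lt_top fun e _ => hk_int e

end CompactGroup

section Torus

lemma integrable_norm_rpow_addCircle {T : ℝ} [hT : Fact (0 < T)] {r : ℝ} (hr : -1 < r) :
    Integrable fun y : AddCircle T => ‖y‖ ^ r := by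
  have habs : IntervalIntegrable (fun x : ℝ => |x| ^ r) volume (-(T / 2)) (-(T / 2) + T) := by
    refine intervalIntegrable_of_even (by simp) fun x hx => ?_
    refine (intervalIntegral.intervalIntegrable_rpow' hr).congr fun z hz => ?_
    rw [Set.uIoc_of_le hx.le] at hz
    simp only [abs_of_pos hz.1]
  rw [intervalIntegrable_iff_integrableOn_Ioc_of_le (by linarith [hT.out])] at habs
  rw [← (AddCircle.measurePreserving_mk T (-(T / 2))).integrable_comp
    (by fun_prop : Measurable fun y : AddCircle T => ‖y‖ ^ r).aestronglyMeasurable]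
  refine habs.congr_fun (fun x hx => ?_) measurableSet_Ioc
  have hx_le : |x| ≤ |T| / 2 := by
    rw [abs_of_pos hT.out, abs_le]
    exact ⟨hx.1.le, by linarith [hx.2]⟩
  simp only [Function.comp_apply, (AddCircle.norm_coe_eq_abs_iff T hT.out.ne').mpr hx_le]

instance {T : ℝ} [Fact (0 < T)] : NullSingletonClass (volume : Measure (AddCircle T)) :=
  ⟨fun x => by rw [← Metric.closedBall_zero, AddCircle.volume_closedBall]; simp⟩

instance : IsProbabilityMeasure (volume : Measure (AddCircle (1 : ℝ))) :=
  ⟨UnitAddCircle.measure_univ⟩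

lemma norm_rpow_le_prod_norm_rpow {ι : Type*} [Fintype ι] [Nonempty ι] {G : ι → Type*}
    [∀ i, NormedAddCommGroup (G i)] {r : ℝ} (hr : r ≤ 0) {y : ∀ i, G i} (hy : ∀ i, y i ≠ 0) :
    ‖y‖ ^ r ≤ ∏ i, ‖y i‖ ^ (r / Fintype.card ι) := by
  calc ‖y‖ ^ r = ∏ _i : ι, ‖y‖ ^ (r / Fintype.card ι) := by
        rw [Finset.prod_const, Finset.card_univ, ← Real.rpow_mul_natCast (norm_nonneg y),
          div_mul_cancel₀ r (Nat.cast_ne_zero.mpr Fintype.card_ne_zero)]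
    _ ≤ ∏ i, ‖y i‖ ^ (r / Fintype.card ι) :=
        Finset.prod_le_prod (fun _ _ => by positivity) fun i _ =>
          Real.rpow_le_rpow_of_nonpos (norm_pos_iff.mpr (hy i)) (norm_le_pi_norm y i)
            (div_nonpos_of_nonpos_of_nonneg hr (Nat.cast_nonneg _))

lemma integrable_norm_rpow_pi_addCircle {ι : Type*} [Fintype ι] {T : ℝ} [Fact (0 < T)] {r : ℝ}
    (hr : -(Fintype.card ι : ℝ) < r) : Integrable fun y : ι → AddCircle T => ‖y‖ ^ r := by
  rcases le_or_gt 0 r with hr_nonneg | hr_neg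
  · exact (continuous_norm.rpow_const fun _ => .inr hr_nonneg).integrable_of_hasCompactSupport
      (.of_compactSpace _)
  have hcard : (0 : ℝ) < Fintype.card ι := by linarith
  have : Nonempty ι := Fintype.card_pos_iff.mp (mod_cast hcard)
  have hprod : Integrable fun y : ι → AddCircle T => ∏ i, ‖y i‖ ^ (r / Fintype.card ι) :=
    Integrable.fintype_prod fun _ =>
      integrable_norm_rpow_addCircle (by rwa [lt_div_iff₀ hcard, neg_one_mul])
  have hne : ∀ᵐ y : ι → AddCircle T, ∀ i, y i ≠ 0 :=
    ae_all_iff.mpr fun i =>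
      (Measure.quasiMeasurePreserving_eval (fun _ : ι => volume) i).ae (Measure.ae_ne volume 0)
  refine hprod.mono' (by fun_prop : Measurable _).aestronglyMeasurable ?_
  filter_upwards [hne] with y hy
  rw [Real.norm_of_nonneg (by positivity)]
  exact norm_rpow_le_prod_norm_rpow hr_neg.le hy

end Torus

section TruncatedPow

variable {G : Type*} [NormedAddCommGroup G]

/-- The singular kernel `‖y‖ ^ (-b)`, made bounded below by `1`. For `b ≠ 0` its value at
`y = 0` is `1`, because `0 ^ (-b) = 0`. -/
noncomputable def truncatedPow (b : ℝ) (y : G) : ℝ≥0 :=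
  max 1 (‖y‖₊ ^ (-b))

@[fun_prop]
lemma measurable_truncatedPow [MeasurableSpace G] [OpensMeasurableSpace G] (b : ℝ) :
    Measurable (truncatedPow b : G → ℝ≥0) := by
  unfold truncatedPow
  fun_prop

lemma truncatedPow_rpow {b : ℝ} (hb : 0 < b) {y : G} (hy : y ≠ 0) (hy_le : ‖y‖ ≤ 1) (r : ℝ) :
    truncatedPow b y ^ (-r / b) = ‖y‖₊ ^ r := by
  have hone : 1 ≤ ‖y‖₊ ^ (-b) :=
    NNReal.one_le_rpow_of_pos_of_le_one_of_nonpos (nnnorm_pos.mpr hy) hy_le (neg_nonpos.mpr hb.le)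
  rw [truncatedPow, max_eq_right hone, ← NNReal.rpow_mul]
  congr 1
  field_simp

lemma exists_nnnorm_le_mul_truncatedPow_rpow {F : Type*} [SeminormedAddCommGroup F]
    {b ℓ C : ℝ} (hb : 0 < b) (hnorm : ∀ y : G, ‖y‖ ≤ 1) {K : G → F}
    (hK : ∀ y, y ≠ 0 → ‖K y‖ ≤ C * ‖y‖ ^ ℓ) :
    ∃ A : ℝ≥0, ∀ y, ‖K y‖₊ ≤ A * truncatedPow b y ^ (-ℓ / b) := by
  refine ⟨max C.toNNReal ‖K 0‖₊, fun y => ?_⟩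
  rcases eq_or_ne y 0 with rfl | hy
  · simp [truncatedPow, hb.ne']
  · rw [truncatedPow_rpow hb hy (hnorm y), ← NNReal.coe_le_coe]
    calc ‖K y‖ ≤ C * ‖y‖ ^ ℓ := hK y hy
      _ ≤ (max C.toNNReal ‖K 0‖₊ : ℝ≥0) * ‖y‖ ^ ℓ := by
        gcongr
        exact (Real.le_coe_toNNReal C).trans (NNReal.coe_le_coe.mpr (le_max_left _ _))

lemma lintegral_truncatedPow_lt_top [MeasurableSpace G] {μ : Measure G} [IsFiniteMeasure μ] {b : ℝ}
    (hint : Integrable (fun y : G => ‖y‖ ^ (-b)) μ) : ∫⁻ y, truncatedPow b y ∂μ < ∞ := by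
  have hmax : Integrable (fun y : G => (truncatedPow b y : ℝ)) μ := by
    simpa [truncatedPow, Pi.sup_def] using (integrable_const 1).sup hint
  simpa using hmax.lintegral_lt_top

end TruncatedPow

lemma exists_mem_Ioo_inForestPolytope_neg_div {V E : Type*} [DecidableEq V] [Finite E]
    {s t : E → V} {ℓ : E → ℝ} {D : ℝ} (hD : 0 < D)
    (hdeg : ∀ F : Finset E, F.Nonempty →
      0 < ∑ e ∈ F, ℓ e + D * (((F.image s ∪ F.image t).card : ℝ) - 1)) :
    ∃ b ∈ Set.Ioo 0 D, InForestPolytope s t fun e => -ℓ e / b := by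
  have hnear : ∀ᶠ b in 𝓝[<] D, ∀ F : Finset E, F.Nonempty →
      0 < ∑ e ∈ F, ℓ e + b * (((F.image s ∪ F.image t).card : ℝ) - 1) := by
    simp only [Filter.eventually_all]
    exact fun F hF => Filter.Eventually.filter_mono nhdsWithin_le_nhds <|
      (Continuous.continuousAt (by fun_prop)).eventually_const_lt (hdeg F hF)
  obtain ⟨b, hb, hbD⟩ := (hnear.and (Ioo_mem_nhdsLT hD)).exists
  refine ⟨b, hbD, fun F hF => ?_⟩
  rw [← Finset.sum_div, Finset.sum_neg_distrib, div_le_iff₀' hbD.1]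
  linarith [hb F hF]

theorem stmt_0_general {ι V E 𝕜 : Type*} [Fintype ι] [Nonempty ι] [Fintype V] [DecidableEq V]
    [Fintype E] [RCLike 𝕜] {s t : E → V} {ℓ C : E → ℝ} {K : E → (ι → AddCircle (1 : ℝ)) → 𝕜}
    (hK : ∀ e, Measurable (K e)) (hKbound : ∀ e x, x ≠ 0 → ‖K e x‖ ≤ C e * ‖x‖ ^ ℓ e)
    (hdeg : ∀ F : Finset E, F.Nonempty →
      0 < ∑ e ∈ F, ℓ e + (Fintype.card ι : ℝ) * (((F.image s ∪ F.image t).card : ℝ) - 1)) :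
    Integrable fun x : V → ι → AddCircle (1 : ℝ) => ∏ e, K e (x (s e) - x (t e)) := by
  obtain ⟨b, ⟨hb, hb_lt⟩, hp⟩ :=
    exists_mem_Ioo_inForestPolytope_neg_div (mod_cast Fintype.card_pos) hdeg
  have hnorm : ∀ y : ι → AddCircle (1 : ℝ), ‖y‖ ≤ 1 := fun y =>
    (pi_norm_le_iff_of_nonneg zero_le_one).mpr fun i =>
      (AddCircle.norm_le_half_period 1 one_ne_zero).trans (by norm_num)
  choose A hA using fun e => exists_nnnorm_le_mul_truncatedPow_rpow hb hnorm (hKbound e)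
  have hk_int : ∫⁻ y : ι → AddCircle (1 : ℝ), truncatedPow b y < ∞ :=
    lintegral_truncatedPow_lt_top (integrable_norm_rpow_pi_addCircle (by linarith))
  refine ⟨(by fun_prop : Measurable _).aestronglyMeasurable, ?_⟩
  calc ∫⁻ x : V → ι → AddCircle (1 : ℝ), ‖∏ e, K e (x (s e) - x (t e))‖ₑ
      ≤ ∫⁻ x : V → ι → AddCircle (1 : ℝ), ((∏ e, A e : ℝ≥0) : ℝ≥0∞) *
          ((∏ e, truncatedPow b (x (s e) - x (t e)) ^ (-ℓ e / b) : ℝ≥0) : ℝ≥0∞) := by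
        refine lintegral_mono fun x => ?_
        rw [enorm_eq_nnnorm, nnnorm_prod, ← ENNReal.coe_mul, ← Finset.prod_mul_distrib]
        exact ENNReal.coe_le_coe.mpr (Finset.prod_le_prod' fun e _ => hA e _)
    _ < ∞ := by
        rw [lintegral_const_mul _ (by fun_prop)]
        exact ENNReal.mul_lt_top ENNReal.coe_lt_top <| lintegral_prod_rpow_lt_top volume hp
          (fun _ => measurable_truncatedPow b) (fun _ _ => le_max_left _ _) (fun _ => hk_int)

/-- If `deg F > 0` for every nonempty subset `F ⊆ E` of edges, then the
Feynman integral `∫_{Λ^V} ∏_{e ∈ E} |K (x_{s e} - x_{t e})| dx` over the product of copies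
of the torus `Λ = (ℝ/ℤ)^d` indexed by `V` is finite. -/
theorem stmt_0
    (d : ℕ) (hd : 1 ≤ d) (ℓ C : ℝ) (hℓ : ℓ ≤ 0) (hC : 0 < C)
    (K : (Fin d → AddCircle (1 : ℝ)) → ℝ) (hK : Measurable K)
    (hKbound : ∀ x : Fin d → AddCircle (1 : ℝ), x ≠ 0 → |K x| ≤ C * ‖x‖ ^ ℓ)
    (V E : Type) [Fintype V] [Fintype E] [Nonempty V] [DecidableEq V]
    (s t : E → V) (hst : ∀ e : E, s e ≠ t e)
    (hdeg : ∀ F : Finset E, F.Nonempty →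
      0 < ℓ * (F.card : ℝ) + (d : ℝ) * (((F.image s ∪ F.image t).card : ℝ) - 1)) :
    ∫⁻ x : V → (Fin d → AddCircle (1 : ℝ)),
        ∏ e : E, ENNReal.ofReal |K (x (s e) - x (t e))| < ⊤ := by
  have : Nonempty (Fin d) := ⟨⟨0, hd⟩⟩
  have hint := stmt_0_general (s := s) (t := t) (fun _ => hK) (fun _ => hKbound)
    (by simpa [mul_comm] using hdeg)
  simpa [HasFiniteIntegral, enorm_eq_nnnorm, nnnorm_prod, ← Real.enorm_eq_ofReal_abs] using hint.2
end

section
/- Let X and Y be jointly Gaussian centred real random variables with Var X > 0 and Var Y > 0. Then for all n, m ∈ ℕ, E[H_n(X; Var X) · H_m(Y; Var Y)] = δ_{nm} · n! · (E[X·Y])^n, where δ_{nm} is the Kronecker delta. -/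
open MeasureTheory ProbabilityTheory

/-!
For `X` centred and jointly Gaussian with `Y`, Gaussian integration by parts and the recursion
`H_{n+1}(x; v) = x H_n(x; v) - v H_n'(x; v)` show that multiplying by `H_n(X; Var X)` acts as
differentiation in `Y`: `E[H_n(X; Var X) q(Y)] = (E[XY])^n E[q^{(n)}(Y)]` for every polynomial `q`.
For `q = H_m(·; Var Y)` the `n`-th derivative is `m! / (m - n)!` times `H_{m-n}(·; Var Y)`, and
`H_{m-n}(Y; Var Y)` has mean zero unless `n = m`.
-/

open scoped ENNReal NNReal

section Hermite

open Polynomial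

variable {R : Type*} [CommRing R]

/-- The Hermite polynomial `H_n(·; v)` associated with variance `v`, over any commutative ring.
Defining it by its recursion rather than by rescaling `He_n` keeps `v = 0` meaningful: then
`H_n(x; 0) = x ^ n`. -/
noncomputable def hermiteVar (v : R) : ℕ → R[X]
  | 0 => 1
  | n + 1 => X * hermiteVar v n - C v * derivative (hermiteVar v n)

lemma hermiteVar_succ (v : R) (n : ℕ) :
    hermiteVar v (n + 1) = X * hermiteVar v n - C v * derivative (hermiteVar v n) :=
  rfl

lemma derivative_hermiteVar_succ (v : R) (n : ℕ) :
    derivative (hermiteVar v (n + 1)) = (n + 1) • hermiteVar v n := by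
  induction n with
  | zero => simp [hermiteVar]
  | succ n ih =>
    calc derivative (hermiteVar v (n + 1 + 1))
        = hermiteVar v (n + 1) +
            (n + 1) • (X * hermiteVar v n - C v * derivative (hermiteVar v n)) := by
          rw [hermiteVar_succ v (n + 1), derivative_sub, derivative_mul, derivative_C_mul, ih,
            derivative_smul, derivative_X, one_mul, smul_sub, mul_smul_comm, mul_smul_comm,
            add_sub_assoc]
      _ = (n + 1 + 1) • hermiteVar v (n + 1) := by
          rw [← hermiteVar_succ, succ_nsmul' _ (n + 1)]

lemma iterate_derivative_hermiteVar (v : R) (k n : ℕ) :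
    derivative^[k] (hermiteVar v n) = n.descFactorial k • hermiteVar v (n - k) := by
  induction k with
  | zero => simp
  | succ k ih =>
    rw [Function.iterate_succ_apply', ih, derivative_smul, Nat.descFactorial_succ]
    obtain h | h := Nat.eq_zero_or_pos (n - k)
    · simp [h, hermiteVar]
    · obtain ⟨j, hj⟩ := Nat.exists_eq_add_of_lt h
      rw [show n - k = j + 1 by omega, derivative_hermiteVar_succ, show n - (k + 1) = j by omega,
        smul_smul, mul_comm]

lemma hermiteVar_sq_comp_C_mul_X (σ : R) (n : ℕ) :
    (hermiteVar (σ ^ 2) n).comp (C σ * X) =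
      C (σ ^ n) * (hermite n).map (Int.castRingHom R) := by
  induction n with
  | zero => simp [hermiteVar]
  | succ n ih =>
    have hderiv : C σ * (derivative (hermiteVar (σ ^ 2) n)).comp (C σ * X) =
        C (σ ^ n) * (derivative (hermite n)).map (Int.castRingHom R) := by
      simpa [derivative_comp, derivative_map, -map_pow] using congrArg derivative ih
    calc (hermiteVar (σ ^ 2) (n + 1)).comp (C σ * X)
        = C σ * X * (hermiteVar (σ ^ 2) n).comp (C σ * X) -
            C σ * (C σ * (derivative (hermiteVar (σ ^ 2) n)).comp (C σ * X)) := by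
          simp only [hermiteVar_succ, sub_comp, mul_comp, X_comp, C_comp]
          rw [C_pow]
          ring
      _ = C (σ ^ (n + 1)) * (hermite (n + 1)).map (Int.castRingHom R) := by
          rw [ih, hderiv, hermite_succ]
          simp only [Polynomial.map_sub, Polynomial.map_mul, map_X, C_pow]
          ring

lemma pow_mul_aeval_hermite_div {K : Type*} [Field K] {σ : K} (hσ : σ ≠ 0) (n : ℕ) (x : K) :
    σ ^ n * aeval (x / σ) (hermite n) = (hermiteVar (σ ^ 2) n).eval x := by
  have h := congrArg (eval (x / σ)) (hermiteVar_sq_comp_C_mul_X σ n)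
  rw [eval_comp, eval_mul, eval_mul, eval_C, eval_X, mul_div_cancel₀ x hσ, eval_C, eval_map] at h
  simpa [aeval_def] using h.symm

end Hermite

section Stein

variable {E : Type*} [NormedAddCommGroup E] [NormedSpace ℝ E] {μ : ℝ} {v : ℝ≥0}

lemma hasDerivAt_gaussianPDFReal (μ : ℝ) (v : ℝ≥0) (x : ℝ) :
    HasDerivAt (gaussianPDFReal μ v) (-((x - μ) / v) * gaussianPDFReal μ v x) x := by
  have hexponent : HasDerivAt (fun x : ℝ ↦ -(x - μ) ^ 2 / (2 * v)) (-((x - μ) / v)) x := by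
    refine ((((hasDerivAt_id x).sub_const μ).pow 2).neg.div_const (2 * (v : ℝ))).congr_deriv ?_
    simp only [Nat.cast_ofNat, id_eq, Nat.add_one_sub_one, pow_one, mul_one]
    field_simp
  rw [gaussianPDFReal_def]
  exact (hexponent.exp.const_mul _).congr_deriv (by ring)

lemma integrable_gaussianReal_iff (hv : v ≠ 0) {f : ℝ → E} :
    Integrable f (gaussianReal μ v) ↔ Integrable (fun x ↦ gaussianPDFReal μ v x • f x) := by
  rw [gaussianReal_of_var_ne_zero μ hv, integrable_withDensity_iff_integrable_smul'
    (measurable_gaussianPDF μ v) (ae_of_all _ fun _ ↦ gaussianPDF_lt_top)]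
  simp only [toReal_gaussianPDF]

theorem integral_sub_smul_gaussianReal {f f' : ℝ → E} (hderiv : ∀ x, HasDerivAt f (f' x) x)
    (hf : Integrable f (gaussianReal μ v))
    (hxf : Integrable (fun x ↦ (x - μ) • f x) (gaussianReal μ v))
    (hf' : Integrable f' (gaussianReal μ v)) :
    ∫ x, (x - μ) • f x ∂gaussianReal μ v = (v : ℝ) • ∫ x, f' x ∂gaussianReal μ v := by
  obtain rfl | hv := eq_or_ne v 0
  · rw [gaussianReal_zero_var, NNReal.coe_zero, zero_smul]
    exact integral_eq_zero_of_ae (by simp [Filter.EventuallyEq, ae_dirac_eq])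
  have hv' : (v : ℝ) ≠ 0 := NNReal.coe_ne_zero.mpr hv
  have hderiv_pdf_smul (x : ℝ) : HasDerivAt (fun x ↦ (v : ℝ) • gaussianPDFReal μ v x • f x)
      ((v : ℝ) • gaussianPDFReal μ v x • f' x - gaussianPDFReal μ v x • (x - μ) • f x) x := by
    refine (((hasDerivAt_gaussianPDFReal μ v x).smul (hderiv x)).const_smul (v : ℝ)).congr_deriv ?_
    have hcancel : (v : ℝ) * (-((x - μ) / v) * gaussianPDFReal μ v x) =
        -(gaussianPDFReal μ v x * (x - μ)) := by
      field_simp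
    rw [smul_add, smul_smul (v : ℝ) (_ * _), hcancel, neg_smul, mul_smul, ← sub_eq_add_neg]
  rw [integrable_gaussianReal_iff hv] at hf hxf hf'
  have hvf' : Integrable (fun x ↦ (v : ℝ) • gaussianPDFReal μ v x • f' x) := hf'.smul _
  have hzero := integral_eq_zero_of_hasDerivAt_of_integrable hderiv_pdf_smul
    (hvf'.sub hxf) (hf.smul (v : ℝ))
  rw [integral_sub hvf' hxf, integral_smul, sub_eq_zero] at hzero
  rw [integral_gaussianReal_eq_integral_smul hv, integral_gaussianReal_eq_integral_smul hv, hzero]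

theorem integral_sub_smul_prod_gaussianReal {α : Type*} [MeasurableSpace α] {ν : Measure α}
    [SFinite ν] {f f' : α × ℝ → E}
    (hderiv : ∀ w x, HasDerivAt (fun x ↦ f (w, x)) (f' (w, x)) x)
    (hf : Integrable f (ν.prod (gaussianReal μ v)))
    (hxf : Integrable (fun z ↦ (z.2 - μ) • f z) (ν.prod (gaussianReal μ v)))
    (hf' : Integrable f' (ν.prod (gaussianReal μ v))) :
    ∫ z, (z.2 - μ) • f z ∂ν.prod (gaussianReal μ v) =
      (v : ℝ) • ∫ z, f' z ∂ν.prod (gaussianReal μ v) := by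
  rw [integral_prod _ hxf, integral_prod _ hf', ← integral_smul]
  refine integral_congr_ae ?_
  filter_upwards [hf.prod_right_ae, hxf.prod_right_ae, hf'.prod_right_ae] with w hw hxw hw'
  exact integral_sub_smul_gaussianReal (hderiv w) hw hxw hw'

end Stein

section GaussianVariables

variable {Ω : Type*} {mΩ : MeasurableSpace Ω} {P : Measure Ω} {X Y : Ω → ℝ}

theorem integral_sub_smul_of_indepFun {E α : Type*} [NormedAddCommGroup E] [NormedSpace ℝ E]
    [MeasurableSpace α] {W : Ω → α} {f f' : α × ℝ → E} (hX : HasGaussianLaw X P)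
    (hW : AEMeasurable W P) (hWX : W ⟂ᵢ[P] X)
    (hderiv : ∀ w x, HasDerivAt (fun x ↦ f (w, x)) (f' (w, x)) x)
    (hf_meas : StronglyMeasurable f) (hf'_meas : StronglyMeasurable f')
    (hf : Integrable (fun ω ↦ f (W ω, X ω)) P)
    (hXf : Integrable (fun ω ↦ (X ω - P[X]) • f (W ω, X ω)) P)
    (hf' : Integrable (fun ω ↦ f' (W ω, X ω)) P) :
    ∫ ω, (X ω - P[X]) • f (W ω, X ω) ∂P = Var[X; P] • ∫ ω, f' (W ω, X ω) ∂P := by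
  have := hX.isProbabilityMeasure
  have hWX_meas : AEMeasurable (fun ω ↦ (W ω, X ω)) P := hW.prodMk hX.aemeasurable
  have hXf_meas : StronglyMeasurable (fun z : α × ℝ ↦ (z.2 - P[X]) • f z) :=
    (measurable_snd.sub_const _).stronglyMeasurable.smul hf_meas
  have hlaw : P.map (fun ω ↦ (W ω, X ω)) =
      (P.map W).prod (gaussianReal P[X] Var[X; P].toNNReal) := by
    rw [(indepFun_iff_map_prod_eq_prod_map_map hW hX.aemeasurable).mp hWX, hX.map_eq_gaussianReal]
  have hstein := integral_sub_smul_prod_gaussianReal hderiv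
    (by rwa [← hlaw, integrable_map_measure hf_meas.aestronglyMeasurable hWX_meas])
    (by rwa [← hlaw, integrable_map_measure hXf_meas.aestronglyMeasurable hWX_meas])
    (by rwa [← hlaw, integrable_map_measure hf'_meas.aestronglyMeasurable hWX_meas])
  rwa [← hlaw, integral_map hWX_meas hXf_meas.aestronglyMeasurable,
    integral_map hWX_meas hf'_meas.aestronglyMeasurable,
    Real.coe_toNNReal _ (variance_nonneg X P)] at hstein

lemma covariance_eq_zero_of_variance_eq_zero [IsFiniteMeasure P] (hX : MemLp X 2 P)
    (hvar : Var[X; P] = 0) (Y : Ω → ℝ) : cov[X, Y; P] = 0 := by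
  refine integral_eq_zero_of_ae ?_
  filter_upwards [ae_eq_integral_of_variance_eq_zero hX hvar] with ω hω
  simp [hω]

lemma exists_indepFun_sub_const_mul (hXY : HasGaussianLaw (fun ω ↦ (X ω, Y ω)) P) :
    ∃ c : ℝ, c * Var[X; P] = cov[X, Y; P] ∧ (fun ω ↦ Y ω - c * X ω) ⟂ᵢ[P] X := by
  have := hXY.isProbabilityMeasure
  have hX := hXY.fst.memLp_two
  have hc : cov[X, Y; P] / Var[X; P] * Var[X; P] = cov[X, Y; P] :=
    div_mul_cancel_of_imp fun h ↦ covariance_eq_zero_of_variance_eq_zero hX h Y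
  set c := cov[X, Y; P] / Var[X; P]
  refine ⟨c, hc, ?_⟩
  have hlaw : HasGaussianLaw (fun ω ↦ (X ω, Y ω - c * X ω)) P :=
    hXY.map_fun ((ContinuousLinearMap.fst ℝ ℝ ℝ).prod
      (ContinuousLinearMap.snd ℝ ℝ ℝ - c • ContinuousLinearMap.fst ℝ ℝ ℝ))
  refine (hlaw.indepFun_of_covariance_eq_zero ?_).symm
  rw [covariance_fun_sub_right hX hXY.snd.memLp_two (hX.const_mul c), covariance_const_mul_right,
    covariance_self hXY.fst.aemeasurable, hc, sub_self]

lemma memLp_eval_of_forall_memLp [IsFiniteMeasure P] (hX : ∀ r : ℝ≥0∞, r ≠ ∞ → MemLp X r P)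
    (p : Polynomial ℝ) {r : ℝ≥0∞} (hr : r ≠ ∞) : MemLp (fun ω ↦ p.eval (X ω)) r P := by
  induction p using Polynomial.induction_on generalizing r with
  | C a => simpa using memLp_const a
  | add p q hp hq =>
    simp only [Polynomial.eval_add]
    exact (hp hr).add (hq hr)
  | monomial n a ih =>
    have hr2 : 2 * r ≠ ∞ := by finiteness
    have : ENNReal.HolderTriple (2 * r) (2 * r) r := by
      constructor
      rw [ENNReal.mul_inv (by simp) (by simp), ← add_mul, ENNReal.inv_two_add_inv_two, one_mul]
    simpa [pow_succ, mul_assoc] using (hX (2 * r) hr2).mul' (ih hr2)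

lemma integrable_eval_mul_eval (hX : HasGaussianLaw X P) (hY : HasGaussianLaw Y P)
    (p q : Polynomial ℝ) : Integrable (fun ω ↦ p.eval (X ω) * q.eval (Y ω)) P := by
  have := hX.isProbabilityMeasure
  have hp : MemLp (fun ω ↦ p.eval (X ω)) 2 P :=
    memLp_eval_of_forall_memLp (fun _ ↦ hX.memLp) p ENNReal.ofNat_ne_top
  have hq : MemLp (fun ω ↦ q.eval (Y ω)) 2 P :=
    memLp_eval_of_forall_memLp (fun _ ↦ hY.memLp) q ENNReal.ofNat_ne_top
  exact hp.integrable_mul hq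

-- Replacing `Y` by `W + c X` with `W` independent of `X` reduces to Stein's identity in `X` alone;
-- the chain rule then produces the factor `c * Var X = cov(X, Y)`.
theorem integral_sub_mul_eval_mul_eval (hXY : HasGaussianLaw (fun ω ↦ (X ω, Y ω)) P)
    (p q : Polynomial ℝ) :
    ∫ ω, (X ω - P[X]) * (p.eval (X ω) * q.eval (Y ω)) ∂P =
      Var[X; P] * ∫ ω, p.derivative.eval (X ω) * q.eval (Y ω) ∂P +
        cov[X, Y; P] * ∫ ω, p.eval (X ω) * q.derivative.eval (Y ω) ∂P := by
  obtain ⟨c, hc, hindep⟩ := exists_indepFun_sub_const_mul hXY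
  have hX := hXY.fst
  have hY := hXY.snd
  have hint := integrable_eval_mul_eval hX hY
  have hint_mul : Integrable (fun ω ↦ (X ω - P[X]) * (p.eval (X ω) * q.eval (Y ω))) P := by
    have h := hint ((Polynomial.X - Polynomial.C P[X]) * p) q
    simpa [mul_assoc] using h
  have hderiv (w x : ℝ) : HasDerivAt (fun x ↦ p.eval x * q.eval (w + c * x))
      (p.derivative.eval x * q.eval (w + c * x) +
        c * (p.eval x * q.derivative.eval (w + c * x))) x := by
    have hline : HasDerivAt (fun x ↦ w + c * x) c x := by
      simpa using ((hasDerivAt_id x).const_mul c).const_add w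
    exact ((p.hasDerivAt x).mul ((q.hasDerivAt _).comp x hline)).congr_deriv (by simp; ring)
  have hstein := integral_sub_smul_of_indepFun
    (f := fun z ↦ p.eval z.2 * q.eval (z.1 + c * z.2))
    (f' := fun z ↦ p.derivative.eval z.2 * q.eval (z.1 + c * z.2) +
      c * (p.eval z.2 * q.derivative.eval (z.1 + c * z.2)))
    hX (by fun_prop) hindep hderiv
    (Continuous.stronglyMeasurable (by fun_prop)) (Continuous.stronglyMeasurable (by fun_prop))
    (by simpa using hint p q) (by simpa using hint_mul)
    (by
      simp only [sub_add_cancel]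
      exact (hint p.derivative q).add ((hint p q.derivative).const_mul c))
  simp only [sub_add_cancel, smul_eq_mul] at hstein
  rw [hstein, integral_add (hint _ _) ((hint _ _).const_mul c), integral_const_mul, mul_add,
    ← mul_assoc, mul_comm _ c, hc]

theorem integral_hermiteVar_succ_mul_eval (hXY : HasGaussianLaw (fun ω ↦ (X ω, Y ω)) P)
    (hX0 : P[X] = 0) (n : ℕ) (q : Polynomial ℝ) :
    ∫ ω, (hermiteVar Var[X; P] (n + 1)).eval (X ω) * q.eval (Y ω) ∂P =
      cov[X, Y; P] * ∫ ω, (hermiteVar Var[X; P] n).eval (X ω) * q.derivative.eval (Y ω) ∂P := by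
  set H := hermiteVar Var[X; P] n
  have hint := integrable_eval_mul_eval hXY.fst hXY.snd
  have hXH : Integrable (fun ω ↦ X ω * (H.eval (X ω) * q.eval (Y ω))) P := by
    have h := hint (Polynomial.X * H) q
    simpa [mul_assoc] using h
  calc ∫ ω, (hermiteVar Var[X; P] (n + 1)).eval (X ω) * q.eval (Y ω) ∂P
      = ∫ ω, (X ω * (H.eval (X ω) * q.eval (Y ω)) -
          Var[X; P] * (H.derivative.eval (X ω) * q.eval (Y ω))) ∂P := by
        simp only [hermiteVar, Polynomial.eval_sub, Polynomial.eval_mul, Polynomial.eval_X,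
          Polynomial.eval_C, sub_mul, mul_assoc, H]
    _ = ∫ ω, X ω * (H.eval (X ω) * q.eval (Y ω)) ∂P -
          Var[X; P] * ∫ ω, H.derivative.eval (X ω) * q.eval (Y ω) ∂P := by
        rw [integral_sub hXH ((hint _ _).const_mul _), integral_const_mul]
    _ = cov[X, Y; P] * ∫ ω, H.eval (X ω) * q.derivative.eval (Y ω) ∂P := by
        have hstein := integral_sub_mul_eval_mul_eval hXY H q
        simp only [hX0, sub_zero] at hstein
        rw [hstein, add_sub_cancel_left]

theorem integral_hermiteVar_mul_eval (hXY : HasGaussianLaw (fun ω ↦ (X ω, Y ω)) P)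
    (hX0 : P[X] = 0) (n : ℕ) (q : Polynomial ℝ) :
    ∫ ω, (hermiteVar Var[X; P] n).eval (X ω) * q.eval (Y ω) ∂P =
      cov[X, Y; P] ^ n * ∫ ω, (Polynomial.derivative^[n] q).eval (Y ω) ∂P := by
  induction n generalizing q with
  | zero => simp [hermiteVar]
  | succ n ih =>
    rw [integral_hermiteVar_succ_mul_eval hXY hX0, ih, Function.iterate_succ_apply, pow_succ']
    ring

lemma integral_hermiteVar (hX : HasGaussianLaw X P) (hX0 : P[X] = 0) (n : ℕ) :
    ∫ ω, (hermiteVar Var[X; P] n).eval (X ω) ∂P = if n = 0 then 1 else 0 := by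
  have := hX.isProbabilityMeasure
  have hXX : HasGaussianLaw (fun ω ↦ (X ω, X ω)) P :=
    hX.map_fun ((ContinuousLinearMap.id ℝ ℝ).prod (ContinuousLinearMap.id ℝ ℝ))
  have h := integral_hermiteVar_mul_eval hXX hX0 n 1
  obtain rfl | hn := Nat.eq_zero_or_pos n
  · simp [hermiteVar]
  · simpa [Polynomial.iterate_derivative_one hn, hn.ne'] using h

theorem integral_hermiteVar_mul_hermiteVar (hXY : HasGaussianLaw (fun ω ↦ (X ω, Y ω)) P)
    (hX0 : P[X] = 0) (hY0 : P[Y] = 0) (n m : ℕ) :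
    ∫ ω, (hermiteVar Var[X; P] n).eval (X ω) * (hermiteVar Var[Y; P] m).eval (Y ω) ∂P =
      if n = m then n.factorial * cov[X, Y; P] ^ n else 0 := by
  rw [integral_hermiteVar_mul_eval hXY hX0, iterate_derivative_hermiteVar]
  simp only [nsmul_eq_mul, Polynomial.eval_mul, Polynomial.eval_natCast, integral_const_mul,
    integral_hermiteVar hXY.snd hY0]
  obtain h | rfl | h := lt_trichotomy n m
  · simp [h.ne, Nat.sub_ne_zero_of_lt h]
  · simp [Nat.descFactorial_self, mul_comm]
  · simp [h.ne', Nat.descFactorial_of_lt h]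

lemma hasGaussianLaw_prodMk_of_forall_map_eq_gaussianReal (hX : AEMeasurable X P)
    (hY : AEMeasurable Y P)
    (h : ∀ u v : ℝ, ∃ (μ : ℝ) (σ : ℝ≥0),
      P.map (fun ω ↦ u * X ω + v * Y ω) = gaussianReal μ σ) :
    HasGaussianLaw (fun ω ↦ (X ω, Y ω)) P where
  isGaussian_map := by
    refine isGaussian_of_map_eq_gaussianReal fun L ↦ ?_
    obtain ⟨μ, σ, hσ⟩ := h (L (1, 0)) (L (0, 1))
    refine ⟨μ, σ, ?_⟩
    rw [AEMeasurable.map_map_of_aemeasurable (by fun_prop) (by fun_prop), ← hσ]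
    congr 1 with ω
    have hcoord : (X ω, Y ω) = X ω • ((1, 0) : ℝ × ℝ) + Y ω • ((0, 1) : ℝ × ℝ) := by simp
    rw [Function.comp_apply, hcoord, map_add, map_smul, map_smul]
    simp only [smul_eq_mul, mul_comm]

lemma integral_eq_of_map_eq_gaussianReal {μ : ℝ} {σ : ℝ≥0} (h : P.map X = gaussianReal μ σ) :
    P[X] = μ := by
  have hX : HasGaussianLaw X P := ⟨h ▸ inferInstance⟩
  exact (gaussianReal_ext_iff.mp (hX.map_eq_gaussianReal.symm.trans h)).1

end GaussianVariables

/-- For jointly Gaussian centred real random variables `X, Y` with positive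
variances, `E[H_n(X; Var X) · H_m(Y; Var Y)] = δ_{nm} · n! · (E[X·Y])^n`, where
`H_n(x; σ²) = σ^n · He_n(x/σ)` is the Hermite polynomial with variance `σ²` and `He_n`
is the probabilists' Hermite polynomial. -/
theorem stmt_1
    {Ω : Type} [MeasureSpace Ω] [IsProbabilityMeasure (volume : Measure Ω)]
    (X Y : Ω → ℝ) (hX : Measurable X) (hY : Measurable Y)
    (hGauss : ∀ u v : ℝ, ∃ σ : NNReal,
      Measure.map (fun ω => u * X ω + v * Y ω) volume = gaussianReal 0 σ)
    (hVX : 0 < variance X volume) (hVY : 0 < variance Y volume)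
    (n m : ℕ) :
    ∫ ω, (Real.sqrt (variance X volume) ^ n *
          Polynomial.aeval (X ω / Real.sqrt (variance X volume)) (Polynomial.hermite n)) *
        (Real.sqrt (variance Y volume) ^ m *
          Polynomial.aeval (Y ω / Real.sqrt (variance Y volume)) (Polynomial.hermite m))
      = (if n = m then (1 : ℝ) else 0) * n.factorial * (∫ ω, X ω * Y ω) ^ n := by
  have hXY : HasGaussianLaw (fun ω ↦ (X ω, Y ω)) volume :=
    hasGaussianLaw_prodMk_of_forall_map_eq_gaussianReal hX.aemeasurable hY.aemeasurable
      fun u v ↦ ⟨0, hGauss u v⟩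
  have hX0 : ∫ ω, X ω = 0 :=
    integral_eq_of_map_eq_gaussianReal (by simpa using (hGauss 1 0).choose_spec)
  have hY0 : ∫ ω, Y ω = 0 :=
    integral_eq_of_map_eq_gaussianReal (by simpa using (hGauss 0 1).choose_spec)
  have hcov : cov[X, Y; volume] = ∫ ω, X ω * Y ω := by simp [covariance, hX0, hY0]
  simp only [pow_mul_aeval_hermite_div (Real.sqrt_pos.mpr hVX).ne',
    pow_mul_aeval_hermite_div (Real.sqrt_pos.mpr hVY).ne', Real.sq_sqrt hVX.le,
    Real.sq_sqrt hVY.le]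
  rw [integral_hermiteVar_mul_hermiteVar hXY hX0 hY0, hcov, mul_assoc, ite_mul, one_mul, zero_mul]
end

section
/- The order of the isomorphism group G is |G| = ∏_{k ∈ ℕ} β(k)! · (k!)^{β(k)}, which is the symmetry factor S_M(z^β) of the multi-index β recording the number β(k) of vertices carrying exactly k half-edges. -/
/-!
Projecting an automorphism `(σ, τ)` of the half-edge structure to `σ` is a group homomorphism.
Its kernel consists of the permutations of half-edges that preserve every fibre of `π`, so it has
`∏ v, (valence v)!` elements. Its range consists of the vertex permutations preserving the valence,
since these lift by matching equinumerous fibres; applying the count of fibre-preserving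
permutations to the valence map itself, the range has `∏ k, β(k)!` elements.
-/

open Finset Equiv
open scoped Nat

theorem prod_comp_of_maps_to {ι κ M : Type*} [CommMonoid M] [DecidableEq κ] {s : Finset ι}
    {t : Finset κ} {g : ι → κ} (hg : ∀ i ∈ s, g i ∈ t) (f : κ → M) :
    ∏ i ∈ s, f (g i) = ∏ k ∈ t, f k ^ #{i ∈ s | g i = k} := by
  simp only [← prod_const, prod_fiberwise_of_maps_to' hg]

section PermFibers

variable {α ι : Type*}

theorem card_perm_comp_eq_self [Fintype α] [DecidableEq ι] (f : α → ι) {s : Finset ι}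
    (hf : ∀ a, f a ∈ s) :
    Nat.card {σ : Perm α // f ∘ σ = f} = ∏ i ∈ s, (#{a | f a = i})! := by
  classical
  have image_subset : univ.image f ⊆ s := image_subset_iff.2 fun a _ ↦ hf a
  have factorial_eq_one : ∀ i ∈ s, i ∉ univ.image f → (#{a | f a = i})! = 1 := by
    intro i _ hi
    have fiber_empty : ({a | f a = i} : Finset α) = ∅ :=
      filter_eq_empty_iff.2 fun a _ ha ↦ hi (mem_image.2 ⟨a, mem_univ a, ha⟩)
    rw [fiber_empty, card_empty, Nat.factorial_zero]
  rw [Nat.card_eq_fintype_card, DomMulAct.stabilizer_card']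
  simp only [Fintype.card_subtype]
  exact prod_subset image_subset factorial_eq_one

theorem exists_perm_comp_eq_iff_nonempty_fiber_equiv (f : α → ι) (σ : Perm ι) :
    (∃ τ : Perm α, f ∘ τ = σ ∘ f) ↔ ∀ i, Nonempty ({a // f a = i} ≃ {a // f a = σ i}) := by
  constructor
  · rintro ⟨τ, hτ⟩ i
    refine ⟨τ.subtypeEquiv fun a ↦ ?_⟩
    rw [show f (τ a) = σ (f a) from congrFun hτ a, σ.apply_eq_iff_eq]
  · intro h
    have fiberEquiv : ∀ j, Nonempty ({a // (σ ∘ f) a = j} ≃ {a // f a = j}) := by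
      intro j
      obtain ⟨i, rfl⟩ := σ.surjective j
      simpa only [Function.comp_apply, σ.apply_eq_iff_eq] using h i
    let τ : Perm α := ofFiberEquiv fun j ↦ (fiberEquiv j).some
    exact ⟨τ, funext (ofFiberEquiv_map _)⟩

end PermFibers

section HalfEdges

variable {H V : Type*}

/-- The isomorphism group of the half-edge structure in which `π` attaches half-edges to vertices,
as a subgroup of `Perm V × Perm H`. -/
def halfEdgeIsoGroup (π : H → V) : Subgroup (Perm V × Perm H) where
  carrier := {g | π ∘ g.2 = g.1 ∘ π}
  one_mem' := rfl
  mul_mem' {a b} (ha : π ∘ a.2 = a.1 ∘ π) (hb : π ∘ b.2 = b.1 ∘ π) :=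
    calc π ∘ (a.2 ∘ b.2) = a.1 ∘ (π ∘ b.2) := congrArg (· ∘ b.2) ha
      _ = (a.1 ∘ b.1) ∘ π := congrArg (a.1 ∘ ·) hb
  inv_mem' {a} (ha : π ∘ a.2 = a.1 ∘ π) := by
    change π ∘ a.2.symm = a.1.symm ∘ π
    rw [comp_symm_eq, Function.comp_assoc, ha, ← Function.comp_assoc, symm_comp_self,
      Function.id_comp]

/-- The valence of a vertex: the number of half-edges attached to it. -/
def valence [Fintype H] [DecidableEq V] (π : H → V) (v : V) : ℕ :=
  #{h | π h = v}

namespace halfEdgeIsoGroup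

/-- The action of the isomorphism group on vertices, `(g_V, g_H) ↦ g_V`. -/
def toVertexPerm (π : H → V) : halfEdgeIsoGroup π →* Perm V :=
  (MonoidHom.fst (Perm V) (Perm H)).comp (halfEdgeIsoGroup π).subtype

theorem mem_range_toVertexPerm {π : H → V} {σ : Perm V} :
    σ ∈ (toVertexPerm π).range ↔ ∃ τ : Perm H, π ∘ τ = σ ∘ π := by
  constructor
  · rintro ⟨⟨⟨_, τ⟩, hτ⟩, rfl⟩
    exact ⟨τ, hτ⟩
  · rintro ⟨τ, hτ⟩
    exact ⟨⟨(σ, τ), hτ⟩, rfl⟩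

theorem mem_range_toVertexPerm_iff_valence_comp [Fintype H] [DecidableEq V] {π : H → V}
    {σ : Perm V} : σ ∈ (toVertexPerm π).range ↔ valence π ∘ σ = valence π := by
  rw [mem_range_toVertexPerm, exists_perm_comp_eq_iff_nonempty_fiber_equiv, funext_iff]
  simp only [← Fintype.card_eq, Fintype.card_subtype]
  exact forall_congr' fun _ ↦ eq_comm

/-- The kernel of the action on vertices, identified with the permutations of half-edges that
preserve every fibre of `π`. -/
def kerToVertexPermEquiv (π : H → V) : (toVertexPerm π).ker ≃ {τ : Perm H // π ∘ τ = π} where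
  toFun g := ⟨g.1.1.2, g.1.2.trans (congrArg (fun σ : Perm V ↦ σ ∘ π) g.2)⟩
  invFun τ := ⟨⟨(1, τ.1), τ.2⟩, rfl⟩
  left_inv g := Subtype.ext (Subtype.ext (Prod.ext (Eq.symm g.2) rfl))
  right_inv _ := rfl

variable [Fintype H] [Fintype V] [DecidableEq V]

theorem card_ker_toVertexPerm (π : H → V) :
    Nat.card (toVertexPerm π).ker = ∏ v, (valence π v)! := by
  rw [Nat.card_congr (kerToVertexPermEquiv π), card_perm_comp_eq_self π fun h ↦ mem_univ (π h)]
  rfl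

theorem card_range_toVertexPerm (π : H → V) {s : Finset ℕ} (hs : ∀ v, valence π v ∈ s) :
    Nat.card (toVertexPerm π).range = ∏ k ∈ s, (#{v | valence π v = k})! := by
  rw [← card_perm_comp_eq_self (valence π) hs]
  exact Nat.card_congr (subtypeEquivRight fun _ ↦ mem_range_toVertexPerm_iff_valence_comp)

end halfEdgeIsoGroup

theorem valence_mem_range [Fintype H] [DecidableEq V] (π : H → V) (v : V) :
    valence π v ∈ range (Fintype.card H + 1) :=
  mem_range_succ_iff.2 (card_le_univ _)

end HalfEdges

/-- For a pre-Feynman diagram given by an attaching map `π : H → V` of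
half-edges to vertices, the isomorphism group
`G = {(g_V, g_H) ∈ Perm V × Perm H : π ∘ g_H = g_V ∘ π}` has order
`∏_k β(k)! · (k!)^{β(k)}`, the symmetry factor `S_M(z^β)` of the multi-index `β`
with `β(k)` the number of vertices carrying exactly `k` half-edges. -/
theorem stmt_3 (H V : Type) [Fintype H] [Fintype V] [DecidableEq H] [DecidableEq V]
    (π : H → V) :
    Nat.card {g : Equiv.Perm V × Equiv.Perm H // π ∘ ⇑g.2 = ⇑g.1 ∘ π} =
      ∏ k ∈ Finset.range (Fintype.card H + 1),
        Nat.factorial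
            (Finset.univ.filter
              (fun v : V => (Finset.univ.filter (fun h : H => π h = v)).card = k)).card *
          Nat.factorial k ^
            (Finset.univ.filter
              (fun v : V => (Finset.univ.filter (fun h : H => π h = v)).card = k)).card := by
  have hs := valence_mem_range π
  calc Nat.card (halfEdgeIsoGroup π)
    _ = Nat.card (halfEdgeIsoGroup.toVertexPerm π).range *
          Nat.card (halfEdgeIsoGroup.toVertexPerm π).ker := by
      rw [← Subgroup.index_ker, mul_comm, Subgroup.card_mul_index]
    _ = (∏ k ∈ range (Fintype.card H + 1), (#{v | valence π v = k})!) *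
          ∏ v, (valence π v)! := by
      rw [halfEdgeIsoGroup.card_range_toVertexPerm π hs, halfEdgeIsoGroup.card_ker_toVertexPerm]
    _ = ∏ k ∈ range (Fintype.card H + 1),
          (#{v | valence π v = k})! * k ! ^ #{v | valence π v = k} := by
      rw [prod_comp_of_maps_to fun v _ ↦ hs v, prod_mul_distrib]
end

section
/- The insertion product ▶ on R is left pre-Lie: for all P, Q, W ∈ R, (P ▶ Q) ▶ W − P ▶ (Q ▶ W) = (Q ▶ P) ▶ W − Q ▶ (P ▶ W). -/
/-- The derivation `D = Σ_k z_{k+1} ∂_{z_k}` on `R = ℚ[z_0, z_1, …]`, determined by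
`D z_k = z_{k+1}`. -/
noncomputable def Dz : Derivation ℚ (MvPolynomial ℕ ℚ) (MvPolynomial ℕ ℚ) :=
  MvPolynomial.mkDerivation ℚ (fun k => MvPolynomial.X (k + 1))

/-- The insertion product `P ▶ Q = Σ_k (D^k P) · (∂_{z_k} Q)` on `R = ℚ[z_0, z_1, …]`. -/
noncomputable def ins (P Q : MvPolynomial ℕ ℚ) : MvPolynomial ℕ ℚ :=
  ∑ᶠ k : ℕ, (⇑Dz)^[k] P * MvPolynomial.pderiv k Q

/-! The map `Q ↦ P ▶ Q` is the unique derivation sending each `z_k` to `D^k P`. It commutes with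
`D`, since on `z_k` both composites give `D^(k+1) P`. Hence the commutator of insertion of `P` and
insertion of `Q` sends `z_k` to `D^k (P ▶ Q) - D^k (Q ▶ P)`, so it is insertion of
`P ▶ Q - Q ▶ P`, which is the left pre-Lie identity. -/

section Gradient

open MvPolynomial

variable {σ R A : Type*} [CommSemiring R] [AddCommMonoid A] [Module R A]
  [Module (MvPolynomial σ R) A] [IsScalarTower R (MvPolynomial σ R) A]

theorem derivation_eq_sum_vars_pderiv
    (d : Derivation R (MvPolynomial σ R) A) (Q : MvPolynomial σ R) :
    d Q = ∑ i ∈ Q.vars, pderiv i Q • d (X i) := by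
  classical
  let gradientSum : Derivation R (MvPolynomial σ R) A :=
    ∑ i ∈ Q.vars, (LinearMap.toSpanSingleton (MvPolynomial σ R) A (d (X i))).compDer (pderiv i)
  have gradientSum_apply (S : MvPolynomial σ R) :
      gradientSum S = ∑ i ∈ Q.vars, pderiv i S • d (X i) := by
    rw [← Derivation.coeFnAddMonoidHom_apply, map_sum, Finset.sum_apply]
    rfl
  have agree_on_vars : ∀ j ∈ Q.vars, d (X j) = gradientSum (X j) := by
    intro j hj
    simp [gradientSum_apply, pderiv_X, Pi.single_apply, ite_smul, hj]
  rw [derivation_eq_of_forall_mem_vars agree_on_vars, gradientSum_apply]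

theorem derivation_eq_finsum_pderiv
    (d : Derivation R (MvPolynomial σ R) A) (Q : MvPolynomial σ R) :
    d Q = ∑ᶠ i, pderiv i Q • d (X i) := by
  rw [finsum_eq_sum_of_support_subset (s := Q.vars), derivation_eq_sum_vars_pderiv]
  refine Function.support_subset_iff'.mpr fun i hi => ?_
  rw [pderiv_eq_zero_of_notMem_vars hi, zero_smul]

end Gradient

section Insertion

open MvPolynomial

variable {R : Type*}

/-- The derivation `D = Σ_k z_{k+1} ∂_{z_k}` over an arbitrary coefficient semiring; `Dz` is the
case of rational coefficients. -/
noncomputable def shiftDerivation (R : Type*) [CommSemiring R] :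
    Derivation R (MvPolynomial ℕ R) (MvPolynomial ℕ R) :=
  mkDerivation R fun k => X (k + 1)

/-- The insertion product `P ▶ Q` over an arbitrary coefficient semiring; `ins` is the case of
rational coefficients. -/
noncomputable def insertion [CommSemiring R] (P Q : MvPolynomial ℕ R) : MvPolynomial ℕ R :=
  ∑ᶠ k : ℕ, (shiftDerivation R)^[k] P * pderiv k Q

/-- The map `Q ↦ P ▶ Q` as a derivation, defined by its values on the variables. -/
noncomputable def insertionDerivation [CommSemiring R] (P : MvPolynomial ℕ R) :
    Derivation R (MvPolynomial ℕ R) (MvPolynomial ℕ R) :=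
  mkDerivation R fun k => (shiftDerivation R)^[k] P

theorem shiftDerivation_X [CommSemiring R] (k : ℕ) :
    shiftDerivation R (X k) = X (k + 1) :=
  mkDerivation_X R _ k

theorem insertionDerivation_X [CommSemiring R] (P : MvPolynomial ℕ R) (k : ℕ) :
    insertionDerivation P (X k) = (shiftDerivation R)^[k] P :=
  mkDerivation_X R _ k

theorem insertion_eq_insertionDerivation [CommSemiring R] (P Q : MvPolynomial ℕ R) :
    insertion P Q = insertionDerivation P Q := by
  simp only [insertion, derivation_eq_finsum_pderiv (insertionDerivation P) Q,
    insertionDerivation_X, smul_eq_mul, mul_comm]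

variable [CommRing R]

theorem lie_insertionDerivation_shiftDerivation (P : MvPolynomial ℕ R) :
    ⁅insertionDerivation P, shiftDerivation R⁆ = 0 := by
  refine derivation_ext fun k => ?_
  rw [Derivation.commutator_apply, shiftDerivation_X, insertionDerivation_X,
    insertionDerivation_X, Function.iterate_succ_apply', sub_self, Derivation.zero_apply]

theorem insertionDerivation_iterate_shiftDerivation (P Q : MvPolynomial ℕ R) (k : ℕ) :
    insertionDerivation P ((shiftDerivation R)^[k] Q) =
      (shiftDerivation R)^[k] (insertionDerivation P Q) := by
  have commute : Function.Commute (insertionDerivation P) (shiftDerivation R) := fun S => by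
    rw [← sub_eq_zero, ← Derivation.commutator_apply, lie_insertionDerivation_shiftDerivation,
      Derivation.zero_apply]
  exact commute.iterate_right k Q

theorem lie_insertionDerivation_insertionDerivation (P Q : MvPolynomial ℕ R) :
    ⁅insertionDerivation P, insertionDerivation Q⁆ =
      insertionDerivation (insertion P Q) - insertionDerivation (insertion Q P) := by
  refine derivation_ext fun k => ?_
  simp only [Derivation.commutator_apply, Derivation.sub_apply, insertionDerivation_X,
    insertionDerivation_iterate_shiftDerivation, insertion_eq_insertionDerivation]

theorem stmt_5_general (P Q W : MvPolynomial ℕ R) :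
    insertion (insertion P Q) W - insertion P (insertion Q W) =
      insertion (insertion Q P) W - insertion Q (insertion P W) := by
  have commutator_apply := DFunLike.congr_fun (lie_insertionDerivation_insertionDerivation P Q) W
  simp only [Derivation.commutator_apply, Derivation.sub_apply,
    ← insertion_eq_insertionDerivation] at commutator_apply
  linear_combination -commutator_apply

end Insertion

/-- the insertion product `▶` is left pre-Lie:
`(P ▶ Q) ▶ W − P ▶ (Q ▶ W) = (Q ▶ P) ▶ W − Q ▶ (P ▶ W)`. -/
theorem stmt_5 (P Q W : MvPolynomial ℕ ℚ) :
    ins (ins P Q) W - ins P (ins Q W) = ins (ins Q P) W - ins Q (ins P W) :=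
  stmt_5_general P Q W
end

section
/- (Explicit formula for the reduced extraction–contraction coproduct of multi-indices.) For all nonzero multi-indices β_1, …, β_n (n ≥ 1), every nonzero multi-index α and every multi-index β, the coefficient of the monomial z^β in the simultaneous insertion ∏_{i=1}^n z^{β_i} ⋆ z^α equals Σ_{k_1,…,k_n ∈ ℕ} Σ_{β = β̂_1 + ⋯ + β̂_n + α̂} ( ⟨(∏_{i=1}^n ∂_{z_{k_i}}) z^α, z^{α̂}⟩ / S(α̂) ) · ∏_{i=1}^n ( ⟨D^{k_i} z^{β_i}, z^{β̂_i}⟩ / S(β̂_i) ), where the inner sum runs over all ordered decompositions of β into multi-indices β̂_1, …, β̂_n, α̂; equivalently, the coefficient E(∏_i z^{β_i}, z^α, z^β) of the reduced extraction–contraction coproduct, defined so that S_forest(β_1,…,β_n) · S(α) · E = S(β) · coeff_{z^β}(∏_{i=1}^n z^{β_i} ⋆ z^α), is given by the stated explicit formula. -/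
/-- The symmetry factor `S(β) = ∏_k β(k)! · (k!)^{β(k)}` of a multi-index `β`. -/
def S (β : ℕ →₀ ℕ) : ℕ :=
  ∏ k ∈ β.support, Nat.factorial (β k) * Nat.factorial k ^ β k

/-- Iterated partial derivatives `(∏_i ∂_{z_{k_i}}) P`. -/
noncomputable def pders (ks : List ℕ) (P : MvPolynomial ℕ ℚ) : MvPolynomial ℕ ℚ :=
  ks.foldr (fun j Q => MvPolynomial.pderiv j Q) P

/-!
Differentiation introduces no new variables and `∂_{z_k}` kills every polynomial without `z_k`, so
`(∏_i ∂_{z_{k_i}}) Q` vanishes unless all the `k_i` index variables of `Q`. The sum over `k` is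
therefore finite and taking a coefficient commutes with it. For fixed `k` the coefficient of the
product of `n + 1` polynomials is a Cauchy product, and dividing `⟨P, z^δ⟩` by `S(δ)` returns the
plain coefficient of `P`.
-/

open MvPolynomial

section CommSemiring

variable {σ R : Type*} [CommSemiring R]

theorem coeff_prod_eq_finsum {ι : Type*} [Fintype ι] (F : ι → MvPolynomial σ R) (γ : σ →₀ ℕ) :
    coeff γ (∏ i, F i) =
      ∑ᶠ (d : ι → σ →₀ ℕ) (_ : ∑ i, d i = γ), ∏ i, coeff (d i) (F i) := by
  classical
  calc
    coeff γ (∏ i, F i) =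
        ∑ d ∈ Finset.finsuppAntidiag Finset.univ γ, ∏ i, coeff (d i) (F i) := by
      rw [← coeff_coe, ← coeToMvPowerSeries.ringHom_apply, map_prod, MvPowerSeries.coeff_prod]
      simp only [coeToMvPowerSeries.ringHom_apply, coeff_coe]
    _ = ∑ᶠ (d : ι →₀ σ →₀ ℕ) (_ : ∑ i, d i = γ), ∏ i, coeff (d i) (F i) :=
      (finsum_cond_eq_sum_of_cond_iff _ (by simp [Finset.mem_finsuppAntidiag])).symm
    _ = _ := finsum_comp_equiv Finsupp.equivFunOnFinite
      (f := fun d => ∑ᶠ _ : ∑ i, d i = γ, ∏ i, coeff (d i) (F i))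

theorem coeff_prod_mul_eq_finsum {ι : Type*} [Fintype ι] (F : ι → MvPolynomial σ R)
    (G : MvPolynomial σ R) (γ : σ →₀ ℕ) :
    coeff γ ((∏ i, F i) * G) =
      ∑ᶠ (p : (ι → σ →₀ ℕ) × (σ →₀ ℕ)) (_ : ∑ i, p.1 i + p.2 = γ),
        coeff p.2 G * ∏ i, coeff (p.1 i) (F i) := by
  let e : (ι → σ →₀ ℕ) × (σ →₀ ℕ) ≃ (Option ι → σ →₀ ℕ) :=
    (Equiv.prodComm _ _).trans (Equiv.piOptionEquivProd (β := fun _ => σ →₀ ℕ)).symm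
  have coeff_option := coeff_prod_eq_finsum (fun o : Option ι => o.elim G F) γ
  rw [← finsum_comp_equiv e] at coeff_option
  simpa [e, Fintype.prod_option, Fintype.sum_option, mul_comm, add_comm] using coeff_option

theorem vars_pderiv_subset (i : σ) (P : MvPolynomial σ R) : (pderiv i P).vars ⊆ P.vars := by
  intro j hj
  obtain ⟨m, hm, hjm⟩ := (mem_vars_iff_mem_support j).mp hj
  rw [mem_support_iff, coeff_pderiv] at hm
  exact (mem_vars_iff_mem_support j).mpr ⟨m + Finsupp.single i 1,
    mem_support_iff.mpr (left_ne_zero_of_mul hm), Finsupp.support_mono le_self_add hjm⟩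

end CommSemiring

theorem vars_pders_subset (ks : List ℕ) (P : MvPolynomial ℕ ℚ) :
    (pders ks P).vars ⊆ P.vars := by
  induction ks with
  | nil => exact Finset.Subset.refl _
  | cons k ks ih => exact (vars_pderiv_subset k _).trans ih

theorem pders_eq_zero_of_notMem_vars {ks : List ℕ} {P : MvPolynomial ℕ ℚ} {k : ℕ} (hk : k ∈ ks)
    (hkP : k ∉ P.vars) : pders ks P = 0 := by
  induction ks with
  | nil => exact absurd hk List.not_mem_nil
  | cons j ks ih =>
    change pderiv j (pders ks P) = 0
    rcases List.mem_cons.mp hk with rfl | hk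
    · exact pderiv_eq_zero_of_notMem_vars fun h => hkP (vars_pders_subset ks P h)
    · rw [ih hk, map_zero]

theorem finite_support_pders_ofFn (n : ℕ) (P : MvPolynomial ℕ ℚ) :
    (Function.support fun k : Fin n → ℕ => pders (List.ofFn k) P).Finite :=
  (Set.Finite.pi' fun _ => P.vars.finite_toSet).subset fun _ hk i =>
    not_imp_comm.mp (pders_eq_zero_of_notMem_vars (List.mem_ofFn.mpr ⟨i, rfl⟩)) hk

theorem S_ne_zero (β : ℕ →₀ ℕ) : S β ≠ 0 :=
  Finset.prod_ne_zero_iff.mpr fun k _ =>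
    mul_ne_zero (Nat.factorial_ne_zero _) (pow_ne_zero _ (Nat.factorial_ne_zero k))

theorem S_mul_div_cancel (β : ℕ →₀ ℕ) (c : ℚ) : (S β : ℚ) * c / S β = c :=
  mul_div_cancel_left₀ c (Nat.cast_ne_zero.mpr (S_ne_zero β))

theorem stmt_6_general (n : ℕ) (F : Fin n → ℕ → MvPolynomial ℕ ℚ) (Q : MvPolynomial ℕ ℚ)
    (γ : ℕ →₀ ℕ) :
    coeff γ (∑ᶠ k : Fin n → ℕ, (∏ i, F i (k i)) * pders (List.ofFn k) Q) =
      ∑ᶠ k : Fin n → ℕ, ∑ᶠ p : (Fin n → (ℕ →₀ ℕ)) × (ℕ →₀ ℕ),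
        if (∑ i, p.1 i) + p.2 = γ then
          ((S p.2 : ℚ) * coeff p.2 (pders (List.ofFn k) Q) / (S p.2 : ℚ)) *
            ∏ i, ((S (p.1 i) : ℚ) * coeff (p.1 i) (F i (k i)) / (S (p.1 i) : ℚ))
        else 0 := by
  have hfinite : (Function.support fun k : Fin n → ℕ =>
      (∏ i, F i (k i)) * pders (List.ofFn k) Q).Finite :=
    (finite_support_pders_ofFn n Q).subset (Function.support_mul_subset_right _ _)
  calc
    _ = ∑ᶠ k : Fin n → ℕ, coeff γ ((∏ i, F i (k i)) * pders (List.ofFn k) Q) :=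
      (coeffAddMonoidHom γ).map_finsum hfinite
    _ = _ := by
      simp only [coeff_prod_mul_eq_finsum, finsum_eq_if, S_mul_div_cancel]

/-- explicit formula for the reduced extraction–contraction coproduct of
multi-indices.  For nonzero multi-indices `β 1, …, β n` (`n ≥ 1`), a nonzero
multi-index `α`, and any multi-index `γ`, the coefficient of `z^γ` in the simultaneous
insertion `∏_i z^{β i} ⋆ z^α = Σ_{k_1,…,k_n} (∏_i D^{k_i} z^{β i}) · ((∏_i ∂_{z_{k_i}}) z^α)`
equals
`Σ_{k_1,…,k_n} Σ_{γ = β̂_1 + ⋯ + β̂_n + α̂} (⟨(∏_i ∂_{z_{k_i}}) z^α, z^{α̂}⟩/S(α̂)) ·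
∏_i (⟨D^{k_i} z^{β i}, z^{β̂_i}⟩/S(β̂_i))`, where `⟨P, z^δ⟩ = S(δ) · coeff_{z^δ} P` and
the inner sum runs over all ordered decompositions of `γ`. -/
theorem stmt_6 (n : ℕ) (hn : 1 ≤ n) (β : Fin n → (ℕ →₀ ℕ)) (hβ : ∀ i, β i ≠ 0)
    (α : ℕ →₀ ℕ) (hα : α ≠ 0) (γ : ℕ →₀ ℕ) :
    MvPolynomial.coeff γ
      (∑ᶠ k : Fin n → ℕ,
        (∏ i, (⇑Dz)^[k i] (MvPolynomial.monomial (β i) (1 : ℚ))) *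
          pders (List.ofFn k) (MvPolynomial.monomial α (1 : ℚ)))
    = ∑ᶠ k : Fin n → ℕ, ∑ᶠ p : (Fin n → (ℕ →₀ ℕ)) × (ℕ →₀ ℕ),
        if (∑ i, p.1 i) + p.2 = γ then
          ((S p.2 : ℚ) *
                MvPolynomial.coeff p.2 (pders (List.ofFn k) (MvPolynomial.monomial α (1 : ℚ))) /
              (S p.2 : ℚ)) *
            ∏ i, ((S (p.1 i) : ℚ) *
                MvPolynomial.coeff (p.1 i) ((⇑Dz)^[k i] (MvPolynomial.monomial (β i) (1 : ℚ))) /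
              (S (p.1 i) : ℚ))
        else 0 :=
  stmt_6_general n (fun i k => Dz^[k] (monomial (β i) 1)) (monomial α 1) γ
end
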